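/- arXiv:2201.05378 — 2 statements merged into one kernel-verified Lean document; each statement's English description precedes it below -/
import Mathlib

section
/- Let p be a prime with p ≡ 1 (mod 3) (and p odd). Then Σ_{k=0}^{(p−1)/3} (6k+1) (1/3)_k^3 / k!^3 ≡ p · Σ_{k=0}^{(p−1)/3} (1/3)_k^2 / (k! (2/3)_k) (mod p^3). -/
open Finset

/-- The Pochhammer symbol `(a)_k = a(a+1)⋯(a+k-1)` for rational `a`. -/
def poch (a : ℚ) (k : ℕ) : ℚ := ∏ j ∈ Finset.range k, (a + j)

/-!
Write `1/3 = a/d` with `a = 1`, `d = 3`, and put `n = (p-1)/3`, so that `p = a + d n` and `n` is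
even. Deform the cubes `(a/d)_k³ / k!³` to `(a/d)_k (a/d+s)_k (a/d-s)_k / (k! (1-s)_k (1+s)_k)` and
the squares `(a/d)_k²` to `(a/d+s)_k (a/d-s)_k`. With denominators cleared, the difference of the
two sides is a polynomial in `y = (d s)²` with coefficients in `ℤ[a, d]`.

* At `s = a/d + n` both sides terminate and agree: the left one is summed by Dougall's `₅F₄`
  theorem (`sum_wellPoisedTerm_neg`), the right one by Chu–Vandermonde
  (`sum_poch_mul_poch_neg_div`). So the polynomial vanishes at `y = (a + d n)²`.
* All its coefficients are divisible by `a + d n`: this number is a factor of the right side, and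
  modulo it the substitution `k ↦ n - k` reverses the sign of every term of the left side, because
  `n` is even.

Hence the value at `y = 0` is divisible by `(a + d n)³`. The cleared denominators are prime to `p`.
-/

open Polynomial

/-! ### Terminating hypergeometric sums -/

lemma poch_zero (a : ℚ) : poch a 0 = 1 := prod_range_zero _

lemma poch_succ (a : ℚ) (k : ℕ) : poch a (k + 1) = poch a k * (a + k) := prod_range_succ _ _

lemma poch_ne_zero {a : ℚ} {k : ℕ} (h : ∀ j < k, a + j ≠ 0) : poch a k ≠ 0 :=
  prod_ne_zero_iff.mpr fun j hj ↦ h j (mem_range.mp hj)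

lemma ascPochhammer_smeval_eq_poch (a : ℚ) (k : ℕ) : (ascPochhammer ℕ k).smeval a = poch a k := by
  rw [ascPochhammer_smeval_eq_eval]
  induction k with
  | zero => simp [poch_zero]
  | succ k ih => rw [ascPochhammer_succ_eval, ih, poch_succ]

lemma descPochhammer_smeval_eq_poch (a : ℚ) (k : ℕ) :
    (descPochhammer ℤ k).smeval a = poch (a - k + 1) k := by
  rw [descPochhammer_smeval_eq_ascPochhammer, ascPochhammer_smeval_eq_poch]

lemma poch_add (a : ℚ) (m n : ℕ) : poch a (m + n) = poch a m * poch (a + m) n := by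
  simp only [poch, prod_range_add, Nat.cast_add, add_assoc]

lemma poch_succ_left (a : ℚ) (k : ℕ) : poch a (k + 1) = a * poch (a + 1) k := by
  rw [add_comm k, poch_add, poch_succ, poch_zero, Nat.cast_zero, Nat.cast_one, one_mul, add_zero]

lemma poch_neg (a : ℚ) (k : ℕ) : poch (-a) k = (-1) ^ k * poch (a - k + 1) k := by
  rw [← ascPochhammer_smeval_eq_poch, ascPochhammer_smeval_neg_eq_descPochhammer,
    descPochhammer_smeval_eq_poch]
  simp [Int.negOnePow_def, Units.smul_def]

lemma poch_neg_natCast (n k : ℕ) : poch (-n : ℚ) k = (-1) ^ k * (k.factorial * n.choose k) := by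
  rw [poch_neg, ← descPochhammer_smeval_eq_poch, descPochhammer_smeval_eq_descFactorial,
    Nat.descFactorial_eq_factorial_mul_choose, Nat.cast_mul]

lemma poch_neg_natCast_succ (n : ℕ) : poch (-n : ℚ) (n + 1) = 0 := by
  rw [poch_succ, neg_add_cancel, mul_zero]

theorem sum_poch_mul_poch_neg_div (b c : ℚ) (n : ℕ) (hc : ∀ j < n, c + j ≠ 0) :
    ∑ k ∈ range (n + 1), poch b k * poch (-n) k / (k.factorial * poch c k) =
      poch (c - b) n / poch c n := by
  have hcn : poch c n ≠ 0 := poch_ne_zero hc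
  have vandermonde := Ring.descPochhammer_smeval_add (r := -b) (s := c + n - 1) n (Commute.all _ _)
  rw [Nat.sum_antidiagonal_eq_sum_range_succ_mk, descPochhammer_smeval_eq_poch,
    show -b + (c + n - 1) - n + 1 = c - b by ring] at vandermonde
  rw [eq_div_iff hcn, vandermonde, sum_mul]
  refine sum_congr rfl fun k hk ↦ ?_
  have hkn : k ≤ n := mem_range_succ_iff.mp hk
  have hck : poch c k ≠ 0 := poch_ne_zero fun j hj ↦ hc j (hj.trans_le hkn)
  have split : poch c n = poch c k * poch (c + k) (n - k) := by
    rw [← poch_add, Nat.add_sub_cancel' hkn]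
  have upper : (descPochhammer ℤ k).smeval (-b) = (-1) ^ k * poch b k := by
    rw [descPochhammer_smeval_eq_poch, ← neg_neg b, poch_neg (-b), neg_neg, ← mul_assoc,
      ← mul_pow, neg_one_mul, neg_neg, one_pow, one_mul]
  have lower : (descPochhammer ℤ (n - k)).smeval (c + n - 1) = poch (c + k) (n - k) := by
    rw [descPochhammer_smeval_eq_poch, Nat.cast_sub hkn]
    ring_nf
  rw [upper, lower, split, poch_neg_natCast]
  field_simp

/-- The `k`-th term of the very-well-poised series
`₅F₄(a, 1+a/2, b, c, e; a/2, 1+a-b, 1+a-c, 1+a-e; 1)` summed by Dougall's theorem, multiplied by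
`a` so that `a (1+a/2)_k / (a/2)_k` can be written as `a + 2k`, without dividing by `a`. -/
def wellPoisedTerm (a b c e : ℚ) (k : ℕ) : ℚ :=
  (a + 2 * k) * (poch a k * poch b k * poch c k * poch e k /
    (k.factorial * poch (1 + a - b) k * poch (1 + a - c) k * poch (1 + a - e) k))

/-- At `e = -n` and `m = n + 1` the right side vanishes, which leaves a recursion in `n` for the
terminating sums. -/
lemma sum_wellPoisedTerm_sub (a b c e : ℚ) (m : ℕ) (hb : ∀ j < m, 1 + a - b + j ≠ 0)
    (hc : ∀ j < m, 1 + a - c + j ≠ 0) (he : ∀ j : ℕ, 1 + a - e + j ≠ 0) :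
    ∑ k ∈ range (m + 1), ((1 + a - b - e) * (1 + a - c - e) * wellPoisedTerm a b c (e - 1) k -
        (1 + a - e) * (1 + a - b - c - e) * wellPoisedTerm a b c e k) =
      (1 + a - e) * (poch a (m + 1) * poch b (m + 1) * poch c (m + 1) * poch e m /
        (m.factorial * poch (1 + a - b) m * poch (1 + a - c) m * poch (1 + a - e) (m + 1))) := by
  have he0 : 1 + a - e ≠ 0 := by simpa using he 0
  induction m with
  | zero =>
    simp only [wellPoisedTerm, zero_add, range_one, sum_singleton, poch_succ, poch_zero,
      Nat.factorial_zero, Nat.cast_zero, Nat.cast_one, mul_zero, add_zero, mul_one, one_mul,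
      div_one]
    field_simp
    ring
  | succ m ih =>
    rw [sum_range_succ, ih (fun j hj ↦ hb j (by omega)) (fun j hj ↦ hc j (by omega))]
    have upper : poch (e - 1) (m + 1) = (e - 1) * poch e m := by
      rw [poch_succ_left, sub_add_cancel]
    have lower : poch (1 + a - (e - 1)) (m + 1) =
        poch (1 + a - e) (m + 1) * (1 + a - e + (m + 1)) / (1 + a - e) := by
      rw [eq_div_iff he0, mul_comm, show 1 + a - (e - 1) = 1 + a - e + 1 by ring,
        ← poch_succ_left, poch_succ, Nat.cast_add_one]
    have hbm : poch (1 + a - b) m ≠ 0 := poch_ne_zero fun j hj ↦ hb j (by omega)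
    have hcm : poch (1 + a - c) m ≠ 0 := poch_ne_zero fun j hj ↦ hc j (by omega)
    have hem : poch (1 + a - e) m ≠ 0 := poch_ne_zero fun j _ ↦ he j
    have hb' := hb m (by omega)
    have hc' := hc m (by omega)
    have he' := he m
    have he'' := he (m + 1)
    push_cast at he''
    rw [wellPoisedTerm, wellPoisedTerm, upper, lower, poch_succ (1 + a - b), poch_succ (1 + a - c),
      poch_succ (1 + a - e) (m + 1), poch_succ (1 + a - e) m, poch_succ a (m + 1),
      poch_succ b (m + 1), poch_succ c (m + 1), poch_succ e, Nat.factorial_succ]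
    push_cast
    field_simp
    ring

theorem sum_wellPoisedTerm_neg (a b c : ℚ) (n : ℕ) (ha : ∀ j : ℕ, 1 + a + j ≠ 0)
    (hb : ∀ j < n, 1 + a - b + j ≠ 0) (hc : ∀ j < n, 1 + a - c + j ≠ 0) :
    ∑ k ∈ range (n + 1), wellPoisedTerm a b c (-n) k =
      poch a (n + 1) * poch (1 + a - b - c) n / (poch (1 + a - b) n * poch (1 + a - c) n) := by
  induction n with
  | zero => simp [wellPoisedTerm, poch_zero, poch_succ]
  | succ n ih =>
    have han (j : ℕ) : 1 + a - (-n : ℚ) + j ≠ 0 := by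
      rw [sub_neg_eq_add, add_assoc]
      exact_mod_cast ha (n + j)
    have vanish : wellPoisedTerm a b c (-n) (n + 1) = 0 := by
      simp [wellPoisedTerm, poch_neg_natCast_succ]
    have recurrence := sum_wellPoisedTerm_sub a b c (-n) (n + 1) hb hc han
    rw [sum_sub_distrib, ← mul_sum, ← mul_sum, sum_range_succ (wellPoisedTerm a b c (-n)),
      vanish, ih (fun j hj ↦ hb j (by omega)) (fun j hj ↦ hc j (by omega)),
      poch_neg_natCast_succ, mul_zero, zero_div, mul_zero, sub_eq_zero] at recurrence
    have hbn : poch (1 + a - b) n ≠ 0 := poch_ne_zero fun j hj ↦ hb j (by omega)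
    have hcn : poch (1 + a - c) n ≠ 0 := poch_ne_zero fun j hj ↦ hc j (by omega)
    have hb' : 1 + a - b - (-n : ℚ) ≠ 0 := by simpa using hb n (by omega)
    have hc' : 1 + a - c - (-n : ℚ) ≠ 0 := by simpa using hc n (by omega)
    rw [Nat.cast_add_one, neg_add', ← mul_right_inj' (mul_ne_zero hb' hc'), recurrence,
      poch_succ a (n + 1), poch_succ (1 + a - b - c), poch_succ (1 + a - b), poch_succ (1 + a - c),
      Nat.cast_add_one]
    simp only [sub_neg_eq_add] at hb' hc' ⊢
    field_simp
    ring

lemma poch_one_sub_sub (a : ℚ) (n : ℕ) : poch (1 - a - n) n = (-1) ^ n * poch a n := by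
  rw [show 1 - a - n = -(a + n - 1) by ring, poch_neg, show a + n - 1 - n + 1 = a by ring]

lemma sum_poch_eq_mul_sum_poch (a : ℚ) (n : ℕ) (hn : Even n) (ha : ∀ j : ℕ, a + j ≠ 0) :
    ∑ k ∈ range (n + 1), (a + 2 * k) * (poch a k * poch (2 * a + n) k * poch (-n) k /
        (k.factorial * poch (1 - a - n) k * poch (1 + a + n) k)) =
      (a + n) * ∑ k ∈ range (n + 1), poch (2 * a + n) k * poch (-n) k /
        (k.factorial * poch ((1 + a) / 2) k) := by
  have ha_succ (j : ℕ) : 1 + a + j ≠ 0 := by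
    simpa [add_assoc, add_comm, add_left_comm] using ha (j + 1)
  have hb (j : ℕ) (hj : j < n) : 1 + a - (2 * a + n) + j ≠ 0 := by
    intro h
    refine ha (n - 1 - j) ?_
    rw [Nat.sub_sub, Nat.cast_sub (by omega)]
    push_cast
    linarith
  have hc (j : ℕ) : (1 + a) / 2 + j ≠ 0 := by
    intro h
    refine ha_succ (2 * j) ?_
    push_cast
    linarith
  have half : 1 + a - (1 + a) / 2 = (1 + a) / 2 := by ring
  have dougall := sum_wellPoisedTerm_neg a (2 * a + n) ((1 + a) / 2) n ha_succ hb
    fun j _ ↦ by rw [half]; exact hc j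
  have hbn := poch_ne_zero hb
  have hcn : poch ((1 + a) / 2) n ≠ 0 := poch_ne_zero fun j _ ↦ hc j
  rw [sum_poch_mul_poch_neg_div _ _ _ fun j _ ↦ hc j]
  rw [half, show 1 + a - (2 * a + n) - (1 + a) / 2 = (1 + a) / 2 - (2 * a + n) by ring,
    show 1 + a - (2 * a + n) = 1 - a - n by ring, poch_one_sub_sub, hn.neg_one_pow, one_mul,
    poch_succ] at dougall
  rw [show 1 + a - (2 * a + n) = 1 - a - n by ring, poch_one_sub_sub, hn.neg_one_pow,
    one_mul] at hbn
  calc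
    _ = ∑ k ∈ range (n + 1), wellPoisedTerm a (2 * a + n) ((1 + a) / 2) (-n) k := by
      refine sum_congr rfl fun k _ ↦ ?_
      have hck : poch ((1 + a) / 2) k ≠ 0 := poch_ne_zero fun j _ ↦ hc j
      rw [wellPoisedTerm, half, show 1 + a - (2 * a + n) = 1 - a - n by ring, sub_neg_eq_add]
      field_simp
    _ = _ := by
      rw [dougall]
      field_simp

/-! ### The defect with cleared denominators -/

section ClearedSum

variable {R S : Type*} [CommRing R] [CommRing S]

/-- The sum `∑ k ≤ n, w k * ∏ j < k, u j / v j` multiplied by its common denominator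
`∏ j < n, v j`, so that it makes sense over any commutative ring. -/
def clearedSum (w u v : ℕ → R) (n : ℕ) : R :=
  ∑ k ∈ range (n + 1), w k * ((∏ j ∈ range k, u j) * ∏ j ∈ Ico k n, v j)

lemma map_clearedSum (f : R →+* S) (w u v : ℕ → R) (n : ℕ) :
    f (clearedSum w u v n) = clearedSum (f ∘ w) (f ∘ u) (f ∘ v) n := by
  simp only [clearedSum, map_sum, map_mul, map_prod, Function.comp_apply]

lemma clearedSum_eq_prod_mul_sum {K : Type*} [Field K] (w u v : ℕ → K) (n : ℕ)
    (hv : ∀ j < n, v j ≠ 0) :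
    clearedSum w u v n =
      (∏ j ∈ range n, v j) * ∑ k ∈ range (n + 1), w k * ∏ j ∈ range k, u j / v j := by
  rw [clearedSum, mul_sum]
  refine sum_congr rfl fun k hk ↦ ?_
  have hkn : k ≤ n := mem_range_succ_iff.mp hk
  have hvk : ∏ j ∈ range k, v j ≠ 0 :=
    prod_ne_zero_iff.mpr fun j hj ↦ hv j ((mem_range.mp hj).trans_le hkn)
  rw [← prod_range_mul_prod_Ico v hkn, prod_div_distrib]
  field_simp

lemma prod_Ico_eq_neg_one_pow_mul_prod {a d : R} {n : ℕ} (k : ℕ) (ht : a + d * n = 0)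
    {F : R → R} (hF : ∀ x, F (-x) = -F x) :
    ∏ j ∈ Ico k n, F (d * (j + 1)) = (-1) ^ (n - k) * ∏ j ∈ range (n - k), F (a + d * j) := by
  rw [prod_Ico_eq_prod_range, ← prod_range_reflect]
  calc
    _ = ∏ j ∈ range (n - k), -F (a + d * j) := by
      refine prod_congr rfl fun j hj ↦ ?_
      have index : k + (n - k - 1 - j) = n - (j + 1) := by have := mem_range.mp hj; omega
      rw [← hF, index, Nat.cast_sub (by have := mem_range.mp hj; omega), Nat.cast_add_one]
      congr 1
      linear_combination ht
    _ = _ := by rw [prod_neg, card_range]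

lemma clearedSum_eq_zero {a d : R} {n : ℕ} (hn : Even n) (ht : a + d * n = 0)
    {F : R → R} (hF : ∀ x, F (-x) = -F x) :
    clearedSum (fun k ↦ a + 2 * d * k) (fun j ↦ F (a + d * j)) (fun j ↦ F (d * (j + 1))) n = 0 := by
  refine sum_involution (fun k _ ↦ n - k) (fun k hk ↦ ?_) (fun k hk hne hfix ↦ hne ?_)
    (fun k _ ↦ by simp) fun k hk ↦ Nat.sub_sub_self (mem_range_succ_iff.mp hk)
  · have hkn : k ≤ n := mem_range_succ_iff.mp hk
    have parity : (-1 : R) ^ (n - k) = (-1) ^ k := by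
      rw [neg_one_pow_congr]; grind
    beta_reduce
    rw [prod_Ico_eq_neg_one_pow_mul_prod _ ht hF, prod_Ico_eq_neg_one_pow_mul_prod _ ht hF,
      Nat.sub_sub_self hkn, Nat.cast_sub hkn, parity]
    linear_combination 2 * (-1) ^ k * (∏ j ∈ range k, F (a + d * j)) *
      (∏ j ∈ range (n - k), F (a + d * j)) * ht
  · have hmid : (n : R) = 2 * k := by
      rw [show n = 2 * k by have := mem_range_succ_iff.mp hk; omega, Nat.cast_mul, Nat.cast_two]
    beta_reduce
    rw [show a + 2 * d * k = 0 by rw [← ht, hmid]; ring, zero_mul]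

/-- The deformation `x (x + t) (x - t)` of `x ^ 3`, as a function of `y = t ^ 2`. -/
def oddCubic (y x : R) : R := x * (x ^ 2 - y)

/-- The difference between the two sides of the congruence for the parameter `a / d`, deformed by
`y = (d s) ^ 2` and multiplied by the common denominator of all terms; `y = 0` is the undeformed
case. See `clearedDefect_eq_mul_sum_poch_sub` for the form with denominators. -/
def clearedDefect (a d y : R) (n : ℕ) : R :=
  (∏ j ∈ range n, (a + d + 2 * d * j)) * clearedSum (fun k ↦ a + 2 * d * k)
      (fun j ↦ oddCubic y (a + d * j)) (fun j ↦ oddCubic y (d * (j + 1))) n -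
    (a + d * n) * (∏ j ∈ range n, ((d * (j + 1)) ^ 2 - y)) * clearedSum (fun _ ↦ 1)
      (fun j ↦ 2 * ((a + d * j) ^ 2 - y)) (fun j ↦ d * (j + 1) * (a + d + 2 * d * j)) n

lemma map_clearedDefect (f : R →+* S) (a d y : R) (n : ℕ) :
    f (clearedDefect a d y n) = clearedDefect (f a) (f d) (f y) n := by
  simp [clearedDefect, map_clearedSum, oddCubic, Function.comp_def, map_ofNat]

lemma dvd_clearedDefect (a d y : R) {n : ℕ} (hn : Even n) :
    a + d * n ∣ clearedDefect a d y n := by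
  rw [← Ideal.mem_span_singleton, ← Ideal.Quotient.eq_zero_iff_mem, map_clearedDefect]
  have ht : Ideal.Quotient.mk (Ideal.span {a + d * n}) a +
      Ideal.Quotient.mk (Ideal.span {a + d * n}) d * n = 0 := by
    rw [← map_natCast (Ideal.Quotient.mk (Ideal.span {a + d * n})), ← map_mul, ← map_add]
    exact Ideal.Quotient.mk_singleton_self _
  rw [clearedDefect, clearedSum_eq_zero hn ht fun x ↦ by simp only [oddCubic]; ring, ht]
  ring

lemma pow_three_dvd_clearedDefect_zero_of_eq_zero [IsDomain R] {a d : R} {n : ℕ} (hn : Even n)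
    (hzero : clearedDefect a d ((a + d * n) ^ 2) n = 0) :
    (a + d * n) ^ 3 ∣ clearedDefect a d 0 n := by
  generalize ht : a + d * n = t at hzero ⊢
  rcases eq_or_ne t 0 with h0 | h0
  · rw [h0, zero_pow two_ne_zero] at hzero
    rw [hzero]
    exact dvd_zero _
  have eval_defect (y : R) :
      (clearedDefect (C a) (C d) X n).eval y = clearedDefect a d y n := by
    rw [← coe_evalRingHom, map_clearedDefect]
    simp
  obtain ⟨M, hM⟩ : C t ∣ clearedDefect (C a) (C d) X n := by
    simpa [← ht] using dvd_clearedDefect (C a) (C d) X hn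
  have factor (y : R) : clearedDefect a d y n = t * M.eval y := by
    rw [← eval_defect, hM, eval_mul, eval_C]
  have root : M.eval (t ^ 2) = 0 :=
    (mul_eq_zero.mp ((factor _).symm.trans hzero)).resolve_left h0
  have sq_dvd : t ^ 2 - 0 ∣ M.eval (t ^ 2) - M.eval 0 := sub_dvd_eval_sub _ _ _
  rw [root, zero_sub, sub_zero, dvd_neg] at sq_dvd
  rw [factor, pow_succ']
  exact mul_dvd_mul_left t sq_dvd

end ClearedSum

/-! ### The defect over the rationals -/

lemma poch_one (k : ℕ) : poch 1 k = k.factorial := by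
  simp only [poch, add_comm (1 : ℚ), ← prod_range_add_one_eq_factorial, Nat.cast_prod,
    Nat.cast_add_one]

lemma prod_oddCubic_div {d s : ℚ} (hd : d ≠ 0) (α : ℚ) (k : ℕ) :
    ∏ j ∈ range k, oddCubic ((d * s) ^ 2) (d * α + d * j) / oddCubic ((d * s) ^ 2) (d * (j + 1)) =
      poch α k * poch (α + s) k * poch (α - s) k /
        (k.factorial * poch (1 - s) k * poch (1 + s) k) := by
  rw [← poch_one]
  simp only [poch, ← prod_mul_distrib, ← prod_div_distrib]
  refine prod_congr rfl fun j _ ↦ ?_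
  rw [← mul_div_mul_left ((α + j) * _ * _) _ (pow_ne_zero 3 hd), oddCubic, oddCubic]
  congr 1 <;> ring

lemma prod_sq_sub_div {d s : ℚ} (hd : d ≠ 0) (α : ℚ) (k : ℕ) :
    ∏ j ∈ range k, 2 * ((d * α + d * j) ^ 2 - (d * s) ^ 2) /
        (d * (j + 1) * (d * α + d + 2 * d * j)) =
      poch (α + s) k * poch (α - s) k / (k.factorial * poch ((1 + α) / 2) k) := by
  rw [← poch_one]
  simp only [poch, ← prod_mul_distrib, ← prod_div_distrib]
  refine prod_congr rfl fun j _ ↦ ?_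
  rw [← mul_div_mul_left ((α + s + j) * _) _ (mul_ne_zero two_ne_zero (pow_ne_zero 2 hd))]
  congr 1 <;> ring

lemma clearedDefect_eq_mul_sum_poch_sub {d s α : ℚ} {n : ℕ} (hd : d ≠ 0)
    (hs : ∀ j < n, ((j : ℚ) + 1) ^ 2 ≠ s ^ 2) (hα : ∀ j < n, 1 + α + 2 * j ≠ 0) :
    clearedDefect (d * α) d ((d * s) ^ 2) n =
      (∏ j ∈ range n, (d * α + d + 2 * d * j)) *
        (∏ j ∈ range n, oddCubic ((d * s) ^ 2) (d * (j + 1))) *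
        (∑ k ∈ range (n + 1), (d * α + 2 * d * k) * (poch α k * poch (α + s) k * poch (α - s) k /
            (k.factorial * poch (1 - s) k * poch (1 + s) k)) -
          (d * α + d * n) * ∑ k ∈ range (n + 1), poch (α + s) k * poch (α - s) k /
            (k.factorial * poch ((1 + α) / 2) k)) := by
  have sq_sub_ne (j : ℕ) (hj : j < n) : (d * (j + 1)) ^ 2 - (d * s) ^ 2 ≠ 0 := by
    rw [mul_pow, mul_pow, ← mul_sub]
    exact mul_ne_zero (pow_ne_zero 2 hd) (sub_ne_zero.mpr (hs j hj))
  have linear_ne (j : ℕ) : d * ((j : ℚ) + 1) ≠ 0 := mul_ne_zero hd (Nat.cast_add_one_ne_zero j)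
  have odd_ne (j : ℕ) (hj : j < n) : d * α + d + 2 * d * j ≠ 0 := by
    rw [show d * α + d + 2 * d * j = d * (1 + α + 2 * j) by ring]
    exact mul_ne_zero hd (hα j hj)
  have cubic_ne (j : ℕ) (hj : j < n) : oddCubic ((d * s) ^ 2) (d * (j + 1)) ≠ 0 :=
    mul_ne_zero (linear_ne j) (sq_sub_ne j hj)
  rw [clearedDefect, clearedSum_eq_prod_mul_sum _ _ _ _ cubic_ne,
    clearedSum_eq_prod_mul_sum _ _ _ _ fun j hj ↦ mul_ne_zero (linear_ne j) (odd_ne j hj)]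
  simp only [prod_oddCubic_div hd, prod_sq_sub_div hd, one_mul]
  simp only [oddCubic, prod_mul_distrib]
  ring

lemma clearedDefect_sq_eq_zero_of_pos {d α : ℚ} {n : ℕ} (hd : d ≠ 0) (hα : 0 < α)
    (hn : Even n) : clearedDefect (d * α) d ((d * α + d * n) ^ 2) n = 0 := by
  have hs (j : ℕ) (hj : j < n) : ((j : ℚ) + 1) ^ 2 ≠ (α + n) ^ 2 := by
    have : (j : ℚ) + 1 ≤ n := mod_cast hj
    exact (pow_lt_pow_left₀ (by linarith) (by positivity) two_ne_zero).ne
  rw [← mul_add, clearedDefect_eq_mul_sum_poch_sub hd hs fun j _ ↦ by positivity]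
  refine mul_eq_zero_of_right _ ?_
  have identity := sum_poch_eq_mul_sum_poch α n hn fun j ↦ by positivity
  rw [show α + (α + n) = 2 * α + n by ring, show α - (α + n) = -n by ring,
    show 1 - (α + n) = 1 - α - n by ring, show 1 + (α + n) = 1 + α + n by ring, ← mul_add,
    mul_assoc, ← identity, mul_sum, sub_eq_zero]
  exact sum_congr rfl fun k _ ↦ by ring

theorem clearedDefect_sq_eq_zero {d : ℚ} (hd : d ≠ 0) (a : ℚ) {n : ℕ} (hn : Even n) :
    clearedDefect a d ((a + d * n) ^ 2) n = 0 := by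
  have eval_defect (b : ℚ) : (clearedDefect X (C d) ((X + C d * (n : ℚ[X])) ^ 2) n).eval b =
      clearedDefect b d ((b + d * n) ^ 2) n := by
    rw [← coe_evalRingHom, map_clearedDefect]
    simp
  have vanish : clearedDefect X (C d) ((X + C d * (n : ℚ[X])) ^ 2) n = 0 := by
    refine eq_zero_of_infinite_isRoot _ (Set.infinite_of_injective_forall_mem
      (f := fun m : ℕ ↦ d * (m + 1)) (fun x y h ↦ by simpa [hd] using h) fun m ↦ ?_)
    rw [Set.mem_ofPred_eq, IsRoot.def, eval_defect]
    exact clearedDefect_sq_eq_zero_of_pos hd (by positivity) hn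
  rw [← eval_defect, vanish, eval_zero]

theorem pow_three_dvd_clearedDefect_zero (a : ℤ) {d : ℤ} {n : ℕ} (hd : d ≠ 0) (hn : Even n) :
    (a + d * n) ^ 3 ∣ clearedDefect a d 0 n := by
  refine pow_three_dvd_clearedDefect_zero_of_eq_zero hn ((Int.castRingHom ℚ).injective_int ?_)
  rw [map_clearedDefect]
  simpa using clearedDefect_sq_eq_zero (Int.cast_ne_zero.mpr hd) a hn

/-! ### The congruence -/

lemma not_dvd_add_add_two_mul {p : ℕ} {a d : ℤ} {n j : ℕ} (hp : Prime (p : ℤ))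
    (hd : ¬ (p : ℤ) ∣ d) (hn : Even n) (hnp : n < p) (hpn : (p : ℤ) ∣ a + d * n) (hj : j < n) :
    ¬ (p : ℤ) ∣ a + d + 2 * d * j := by
  intro h
  have dvd_mul_odd : (p : ℤ) ∣ d * (2 * j + 1 - n) := by
    rw [show d * (2 * j + 1 - n) = a + d + 2 * d * j - (a + d * n) by ring]
    exact dvd_sub h hpn
  have odd_eq_zero := Int.eq_zero_of_abs_lt_dvd ((hp.dvd_or_dvd dvd_mul_odd).resolve_left hd)
    (by rw [abs_lt]; omega)
  grind

lemma not_dvd_oddCubic_zero {p : ℕ} {d : ℤ} {j : ℕ} (hp : Prime (p : ℤ)) (hd : ¬ (p : ℤ) ∣ d)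
    (hj : j + 1 < p) : ¬ (p : ℤ) ∣ oddCubic 0 (d * (j + 1)) := by
  rw [oddCubic, sub_zero, ← pow_succ', hp.dvd_pow_iff_dvd (by decide), hp.dvd_mul, not_or]
  exact ⟨hd, fun h ↦ by have := Int.le_of_dvd (by omega) h; omega⟩

lemma norm_le_of_mul_eq_intCast {p : ℕ} [Fact p.Prime] {x : ℚ_[p]} {M N : ℤ} {m : ℕ}
    (hM : ¬ (p : ℤ) ∣ M) (hN : (p : ℤ) ^ m ∣ N) (h : M * x = N) :
    ‖x‖ ≤ (p : ℝ) ^ (-m : ℤ) := by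
  have norm_M : ‖(M : ℚ_[p])‖ = 1 :=
    (Padic.norm_int_le_one M).antisymm (not_lt.mp (mt (Padic.norm_intCast_lt_one_iff).mp hM))
  rw [← one_mul ‖x‖, ← norm_M, ← norm_mul, h, Padic.norm_int_le_pow_iff_dvd]
  exact mod_cast hN

lemma intCast_clearedDefect_zero {a d : ℤ} {n : ℕ} (hd : d ≠ 0)
    (ha : ∀ j < n, a + d + 2 * d * j ≠ 0) :
    ((clearedDefect a d 0 n : ℤ) : ℚ) =
      ((∏ j ∈ range n, (a + d + 2 * d * j)) * ∏ j ∈ range n, oddCubic 0 (d * (j + 1)) : ℤ) *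
        (∑ k ∈ range (n + 1), (a + 2 * d * k) * poch (a / d) k ^ 3 / (k.factorial : ℚ) ^ 3 -
          (a + d * n) * ∑ k ∈ range (n + 1),
            poch (a / d) k ^ 2 / (k.factorial * poch ((1 + a / d) / 2) k)) := by
  have hd' : (d : ℚ) ≠ 0 := mod_cast hd
  have hα (j : ℕ) (hj : j < n) : 1 + (a / d : ℚ) + 2 * j ≠ 0 := by
    have factored : (a + d + 2 * d * j : ℚ) = d * (1 + a / d + 2 * j) := by
      field_simp
      ring
    have product_ne : (a + d + 2 * d * j : ℚ) ≠ 0 := mod_cast ha j hj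
    exact right_ne_zero_of_mul (factored ▸ product_ne)
  have cleared := clearedDefect_eq_mul_sum_poch_sub (s := 0) hd' (fun j _ ↦ by positivity) hα
  simp only [mul_div_cancel₀ _ hd', mul_zero, zero_pow two_ne_zero, add_zero, sub_zero, poch_one,
    ← pow_two, ← pow_succ, mul_div_assoc'] at cleared
  have cast_defect := map_clearedDefect (Int.castRingHom ℚ) a d 0 n
  simp only [eq_intCast, Int.cast_zero] at cast_defect
  rw [cast_defect, cleared]
  simp [oddCubic]

theorem stmt12_general (p : ℕ) [Fact p.Prime] (a d : ℤ) (n : ℕ) (hd : ¬ (p : ℤ) ∣ d)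
    (hn : Even n) (hnp : n < p) (hpn : (p : ℤ) ∣ a + d * n) :
    ‖((∑ k ∈ range (n + 1), (a + 2 * d * k) * poch (a / d) k ^ 3 / (k.factorial : ℚ) ^ 3 -
        (a + d * n) * ∑ k ∈ range (n + 1),
          poch (a / d) k ^ 2 / (k.factorial * poch ((1 + a / d) / 2) k) : ℚ) : ℚ_[p])‖ ≤
      (p : ℝ) ^ (-3 : ℤ) := by
  have hp : Prime (p : ℤ) := Nat.prime_iff_prime_int.mp Fact.out
  have hd0 : d ≠ 0 := fun h ↦ hd (h ▸ dvd_zero _)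
  have linear_not_dvd (j : ℕ) (hj : j < n) : ¬ (p : ℤ) ∣ a + d + 2 * d * j :=
    not_dvd_add_add_two_mul hp hd hn hnp hpn hj
  have unit : ¬ (p : ℤ) ∣
      (∏ j ∈ range n, (a + d + 2 * d * j)) * ∏ j ∈ range n, oddCubic 0 (d * (j + 1)) := by
    rw [hp.dvd_mul, not_or]
    exact ⟨hp.not_dvd_finsetProd fun j hj ↦ linear_not_dvd j (mem_range.mp hj),
      hp.not_dvd_finsetProd fun j hj ↦
        not_dvd_oddCubic_zero hp hd (by have := mem_range.mp hj; omega)⟩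
  refine norm_le_of_mul_eq_intCast unit
    ((pow_dvd_pow_of_dvd hpn 3).trans (pow_three_dvd_clearedDefect_zero a hd0 hn)) ?_
  exact mod_cast (intCast_clearedDefect_zero hd0
    fun j hj h ↦ linear_not_dvd j hj (h ▸ dvd_zero _)).symm

theorem stmt12 (p : ℕ) [Fact p.Prime] (hodd : Odd p) (hp3 : p % 3 = 1) :
    ‖(((∑ k ∈ Finset.range ((p - 1) / 3 + 1),
          (6 * (k : ℚ) + 1) * poch (1/3) k ^ 3 / ((k.factorial : ℚ)) ^ 3) -
        ((p : ℚ) *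
          ∑ k ∈ Finset.range ((p - 1) / 3 + 1),
            poch (1/3) k ^ 2 / ((k.factorial : ℚ) * poch (2/3) k)) : ℚ) : ℚ_[p])‖ ≤
      (p : ℝ) ^ (-3 : ℤ) := by
  obtain ⟨n, rfl⟩ : ∃ n, p = 1 + 3 * n := ⟨p / 3, by omega⟩
  have not_dvd : ¬ ((1 + 3 * n : ℕ) : ℤ) ∣ 3 := by
    norm_cast
    rw [Nat.prime_dvd_prime_iff_eq Fact.out Nat.prime_three]
    omega
  convert stmt12_general (1 + 3 * n) 1 3 n not_dvd (by grind) (by omega) (by simp)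
    using 6 with k <;> norm_num [add_comm]
end

section
/- Let p be a prime with p ≡ 3 (mod 4). Then Σ_{k=0}^{(p+1)/4} (−1)^k (−1/4)_k^3 / k!^3 ≡ −(−1)^{(p+1)/4} · p · Σ_{k=0}^{(p+1)/4} (−1/4)_k^2 (1/2)_k / (k! (3/8)_k (7/8)_k) (mod p^2). -/
open Finset

/-!
Expand the central binomial coefficients in `∑ (d)_k (-n)_k C(2k,k) / (1+a)_{2k}` by the
Chu–Vandermonde identity and interchange the two summations; the inner sum is again a
Chu–Vandermonde sum, and what remains is a multiple of the well-poised series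
`∑ (-1)^k (a)_k (d)_k (-n)_k / (k! (1+a-d)_k (1+a+n)_k)`.

Now let `x = a + n` be small and take `d = a + x`, so that `-n = a - x`. Modulo `x²`, the products
`(a+x)_k (a-x)_k` and `(1+x)_k (1-x)_k` are `(a)_k²` and `k!²`, so the well-poised series is the sum
of cubes. On the other side the prefactor `(1+a)_n / (1-x)_n` is `(-1)^n x / a`, and
`x / (a (1+a)_{2k}) = x / (a)_{2k+1}` is integral because `a + n = x` is the only factor of
`(a)_{2k+1}` that can fail to be a unit. The case at hand is `a = -1/4`, `n = (p+1)/4`, `x = p/4`.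
-/

local notation "⦅" a "⦆_" k:max => Polynomial.eval a (ascPochhammer _ k)

section CommSemiring

variable {S : Type*} [CommSemiring S]

theorem ascPochhammer_eval_add (a : S) (m n : ℕ) : ⦅a⦆_(m + n) = ⦅a⦆_m * ⦅a + m⦆_n := by
  simp [← ascPochhammer_mul, Polynomial.eval_comp]

theorem ascPochhammer_eval_succ_left (a : S) (n : ℕ) : ⦅a⦆_(n + 1) = a * ⦅a + 1⦆_n := by
  simpa [add_comm] using ascPochhammer_eval_add a 1 n

theorem ascPochhammer_eval_eq_prod_range (a : S) (n : ℕ) : ⦅a⦆_n = ∏ j ∈ range n, (a + j) := by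
  induction n with
  | zero => simp
  | succ n ih => rw [ascPochhammer_succ_eval, ih, prod_range_succ]

theorem ascPochhammer_eval_ne_zero_of_le {a : S} {m n : ℕ} (h : ⦅a⦆_n ≠ 0) (hmn : m ≤ n) :
    ⦅a⦆_m ≠ 0 := by
  rw [← Nat.add_sub_of_le hmn, ascPochhammer_eval_add] at h
  exact left_ne_zero_of_mul h

theorem ascPochhammer_eval_add_natCast_ne_zero {a : S} {m n : ℕ} (h : ⦅a⦆_(m + n) ≠ 0) :
    ⦅a + m⦆_n ≠ 0 := by
  rw [ascPochhammer_eval_add] at h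
  exact right_ne_zero_of_mul h

end CommSemiring

section CommRing

variable {R : Type*} [CommRing R]

theorem ascPochhammer_eval_reflect (a : R) (n : ℕ) : ⦅a⦆_n = (-1) ^ n * ⦅1 - (a + n)⦆_n := by
  rw [← neg_neg a, ascPochhammer_eval_neg_eq_descPochhammer, descPochhammer_eval_eq_ascPochhammer,
    neg_neg, show -a - n + 1 = 1 - (a + n) by ring]

theorem ascPochhammer_eval_neg_natCast (n k : ℕ) :
    ⦅(-n : R)⦆_k = (-1) ^ k * (k.factorial * n.choose k) := by
  rw [ascPochhammer_eval_neg_eq_descPochhammer, descPochhammer_eval_eq_descFactorial,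
    Nat.descFactorial_eq_factorial_mul_choose, Nat.cast_mul]

theorem sum_choose_mul_ascPochhammer (b c : R) (n : ℕ) :
    ∑ k ∈ range (n + 1), (-1) ^ k * n.choose k * ⦅b⦆_k * ⦅c + k⦆_(n - k) = ⦅c - b⦆_n := by
  have desc_eval (r : R) (k : ℕ) : (descPochhammer ℤ k).smeval r = ⦅r - k + 1⦆_k := by
    rw [Polynomial.descPochhammer_smeval_eq_ascPochhammer,
      Polynomial.ascPochhammer_smeval_eq_eval]
  have vandermonde := Ring.descPochhammer_smeval_add n (Commute.all (-b) (c + n - 1))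
  simp only [desc_eval, Nat.sum_antidiagonal_eq_sum_range_succ_mk] at vandermonde
  rw [show -b + (c + n - 1) - n + 1 = c - b by ring] at vandermonde
  rw [vandermonde]
  refine sum_congr rfl fun k hk ↦ ?_
  have hkn : k ≤ n := mem_range_succ_iff.1 hk
  have shift : c + n - 1 - (n - k : ℕ) + 1 = c + k := by
    rw [Nat.cast_sub hkn]
    ring
  have sign : (-1 : R) ^ k * (-1) ^ k = 1 := by rw [← mul_pow]; simp
  rw [ascPochhammer_eval_reflect b, shift, show -b - k + 1 = 1 - (b + k) by ring]
  linear_combination n.choose k * ⦅1 - (b + k)⦆_k * ⦅c + k⦆_(n - k) * sign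

end CommRing

section Field

variable {K : Type*} [Field K]

theorem ascPochhammer_one_add_div {a x : K} {n : ℕ} (hx : x = a + n) (ha : ⦅a⦆_(n + 1) ≠ 0) :
    ⦅1 + a⦆_n / ⦅1 - x⦆_n = (-1) ^ n * (x / a) := by
  have reflect : ⦅a⦆_n = (-1) ^ n * ⦅1 - x⦆_n := hx ▸ ascPochhammer_eval_reflect a n
  have shift : a * ⦅1 + a⦆_n = ⦅a⦆_n * x := by
    rw [add_comm 1 a, ← ascPochhammer_eval_succ_left, ascPochhammer_succ_eval, hx]
  have ha₀ : a ≠ 0 := left_ne_zero_of_mul (ascPochhammer_eval_succ_left a n ▸ ha)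
  have hxn : ⦅1 - x⦆_n ≠ 0 := right_ne_zero_of_mul
    (reflect ▸ ascPochhammer_eval_ne_zero_of_le ha n.le_succ)
  rw [div_eq_iff hxn]
  apply mul_left_cancel₀ ha₀
  rw [shift, reflect]
  field_simp

variable [CharZero K]

theorem ascPochhammer_eval_two_mul (a : K) (k : ℕ) :
    ⦅a⦆_(2 * k) = 4 ^ k * ⦅a / 2⦆_k * ⦅(a + 1) / 2⦆_k := by
  induction k with
  | zero => simp
  | succ k ih =>
    rw [show 2 * (k + 1) = 2 * k + 1 + 1 by ring]
    simp only [ascPochhammer_succ_eval, ih]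
    push_cast
    ring

theorem factorial_two_mul_eq_ascPochhammer (k : ℕ) :
    ((2 * k).factorial : K) = 4 ^ k * ⦅(1 / 2 : K)⦆_k * k.factorial := by
  have := ascPochhammer_eval_two_mul (1 : K) k
  simpa [ascPochhammer_eval_one, one_add_one_eq_two] using this

theorem centralBinom_div_ascPochhammer (a : K) (k : ℕ) :
    k.centralBinom / ⦅1 + a⦆_(2 * k) =
      ⦅(1 / 2 : K)⦆_k / (k.factorial * ⦅(1 + a) / 2⦆_k * ⦅1 + a / 2⦆_k) := by
  have hk : (k.factorial : K) ≠ 0 := mod_cast k.factorial_ne_zero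
  have central : (k.centralBinom : K) * k.factorial = 4 ^ k * ⦅(1 / 2 : K)⦆_k := by
    have choose := Nat.add_choose_mul_factorial_mul_factorial k k
    rw [← two_mul, ← Nat.centralBinom_eq_two_mul_choose] at choose
    apply mul_right_cancel₀ hk
    rw [← factorial_two_mul_eq_ascPochhammer]
    exact_mod_cast choose
  rw [ascPochhammer_eval_two_mul, show (1 + a + 1) / 2 = 1 + a / 2 by ring,
    eq_div_of_mul_eq hk central]
  field_simp

theorem sum_ascPochhammer_chu_vandermonde (b : K) {c : K} {n : ℕ} (hc : ⦅c⦆_n ≠ 0) :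
    ∑ k ∈ range (n + 1), ⦅b⦆_k * ⦅(-n : K)⦆_k / (k.factorial * ⦅c⦆_k) = ⦅c - b⦆_n / ⦅c⦆_n := by
  rw [eq_div_iff hc, ← sum_choose_mul_ascPochhammer, sum_mul]
  refine sum_congr rfl fun k hk ↦ ?_
  have hkn : k ≤ n := mem_range_succ_iff.1 hk
  have hck := ascPochhammer_eval_ne_zero_of_le hc hkn
  have hk : (k.factorial : K) ≠ 0 := mod_cast k.factorial_ne_zero
  have split : ⦅c⦆_n = ⦅c⦆_k * ⦅c + k⦆_(n - k) := by
    rw [← ascPochhammer_eval_add, Nat.add_sub_of_le hkn]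
  rw [split, ascPochhammer_eval_neg_natCast]
  field_simp

theorem sum_ascPochhammer_eq_centralBinom {a : K} {m : ℕ} (ha : ⦅1 + a⦆_(2 * m) ≠ 0) :
    ∑ r ∈ range (m + 1),
        (-1) ^ r * ⦅a⦆_r / (r.factorial * (m - r).factorial * ⦅1 + a⦆_(m + r)) =
      m.centralBinom / ⦅1 + a⦆_(2 * m) := by
  have hm : (m.factorial : K) ≠ 0 := mod_cast m.factorial_ne_zero
  rw [two_mul] at ha
  have ham := ascPochhammer_eval_ne_zero_of_le ha (Nat.le_add_right m m)
  have ham' := ascPochhammer_eval_add_natCast_ne_zero ha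
  have central : ⦅(m + 1 : K)⦆_m = m.factorial * m.centralBinom := by
    have h := factorial_mul_ascPochhammer K m m
    rw [← Nat.add_choose_mul_factorial_mul_factorial m m, ← two_mul,
      ← Nat.centralBinom_eq_two_mul_choose] at h
    push_cast at h
    apply mul_left_cancel₀ hm
    linear_combination h
  have vandermonde := sum_ascPochhammer_chu_vandermonde a ham'
  rw [show 1 + a + m - a = (m + 1 : K) by ring, central] at vandermonde
  calc _ = ∑ r ∈ range (m + 1), ⦅a⦆_r * ⦅(-m : K)⦆_r / (r.factorial * ⦅1 + a + m⦆_r) /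
        (m.factorial * ⦅1 + a⦆_m) := by
        refine sum_congr rfl fun r hr ↦ ?_
        have hrm : r ≤ m := mem_range_succ_iff.1 hr
        have hr : (r.factorial : K) ≠ 0 := mod_cast r.factorial_ne_zero
        rw [ascPochhammer_eval_neg_natCast, ascPochhammer_eval_add, Nat.cast_choose K hrm]
        field_simp
    _ = _ := by
        rw [← sum_div, vandermonde, two_mul, ascPochhammer_eval_add]
        field_simp

theorem sum_ascPochhammer_add_chu_vandermonde {c d : K} {r n : ℕ} (hc : ⦅c⦆_(2 * r + n) ≠ 0)
    (hcd : ⦅c - d⦆_r ≠ 0) :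
    ∑ s ∈ range (n + 1), ⦅d⦆_(r + s) * ⦅(-(r + n : ℕ) : K)⦆_(r + s) /
        (s.factorial * ⦅c⦆_(r + s + r)) =
      ⦅d⦆_r * ⦅(-(r + n : ℕ) : K)⦆_r * ⦅c - d⦆_(r + n) /
        (⦅c - d⦆_r * ⦅c⦆_(r + n) * ⦅c + (r + n : ℕ)⦆_r) := by
  have hc₁ := ascPochhammer_eval_ne_zero_of_le hc (Nat.le_add_right (2 * r) n)
  have hc₂ := ascPochhammer_eval_add_natCast_ne_zero hc
  have vandermonde := sum_ascPochhammer_chu_vandermonde (d + r) hc₂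
  have numerator : ⦅c - d⦆_(r + n) = ⦅c - d⦆_r * ⦅c + (2 * r : ℕ) - (d + r)⦆_n := by
    rw [ascPochhammer_eval_add]
    congr 2
    push_cast
    ring
  have denominator : ⦅c⦆_(r + n) * ⦅c + (r + n : ℕ)⦆_r = ⦅c⦆_(2 * r) * ⦅c + (2 * r : ℕ)⦆_n := by
    rw [← ascPochhammer_eval_add, ← ascPochhammer_eval_add, show r + n + r = 2 * r + n by ring]
  calc _ = ∑ s ∈ range (n + 1), ⦅d⦆_r * ⦅(-(r + n : ℕ) : K)⦆_r / ⦅c⦆_(2 * r) *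
        (⦅d + r⦆_s * ⦅(-n : K)⦆_s / (s.factorial * ⦅c + (2 * r : ℕ)⦆_s)) := by
        refine sum_congr rfl fun s _ ↦ ?_
        rw [show r + s + r = 2 * r + s by ring]
        simp only [ascPochhammer_eval_add]
        rw [show (-(r + n : ℕ) + r : K) = -n by push_cast; ring, div_mul_div_comm]
        congr 1 <;> ring
    _ = _ := by
        rw [← mul_sum, vandermonde, mul_assoc (⦅c - d⦆_r), denominator, numerator]
        field_simp

theorem sum_wellPoised_eq {a d : K} {n : ℕ} (ha : ⦅1 + a⦆_(2 * n) ≠ 0)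
    (hd : ⦅1 + a - d⦆_n ≠ 0) :
    ∑ k ∈ range (n + 1), (-1) ^ k * ⦅a⦆_k * ⦅d⦆_k * ⦅(-n : K)⦆_k /
        (k.factorial * ⦅1 + a - d⦆_k * ⦅1 + a + n⦆_k) =
      ⦅1 + a⦆_n / ⦅1 + a - d⦆_n *
        ∑ k ∈ range (n + 1), ⦅d⦆_k * ⦅(-n : K)⦆_k * (k.centralBinom / ⦅1 + a⦆_(2 * k)) := by
  have han := ascPochhammer_eval_ne_zero_of_le ha (by omega : n ≤ 2 * n)
  let F (r s : ℕ) : K := (-1) ^ r * ⦅a⦆_r / r.factorial *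
    (⦅d⦆_(r + s) * ⦅(-n : K)⦆_(r + s) / (s.factorial * ⦅1 + a⦆_(r + s + r)))
  have expand : ∀ m ∈ range (n + 1),
      ⦅d⦆_m * ⦅(-n : K)⦆_m * (m.centralBinom / ⦅1 + a⦆_(2 * m)) =
        ∑ r ∈ range (m + 1), F r (m - r) := by
    intro m hm
    have ham := ascPochhammer_eval_ne_zero_of_le ha
      (Nat.mul_le_mul_left 2 (mem_range_succ_iff.1 hm))
    rw [← sum_ascPochhammer_eq_centralBinom ham, mul_sum]
    refine sum_congr rfl fun r hr ↦ ?_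
    simp only [F, Nat.add_sub_of_le (mem_range_succ_iff.1 hr)]
    ring
  rw [sum_congr rfl expand, sum_range_diag_flip, mul_sum]
  refine sum_congr rfl fun r hr ↦ ?_
  obtain ⟨N, rfl⟩ := Nat.exists_eq_add_of_le (mem_range_succ_iff.1 hr)
  have inner := sum_ascPochhammer_add_chu_vandermonde (c := 1 + a) (d := d) (r := r) (n := N)
    (ascPochhammer_eval_ne_zero_of_le ha (by omega))
    (ascPochhammer_eval_ne_zero_of_le hd (Nat.le_add_right r N))
  rw [show r + N + 1 - r = N + 1 by omega, ← mul_sum, inner]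
  field_simp

theorem sum_wellPoised_add_mul_sub_eq {a x : K} {n : ℕ} (hx : x = a + n)
    (ha : ⦅a⦆_(2 * n + 1) ≠ 0) :
    ∑ k ∈ range (n + 1), (-1) ^ k * ⦅a⦆_k * (⦅a + x⦆_k * ⦅a - x⦆_k) /
        (k.factorial * (⦅1 + x⦆_k * ⦅1 - x⦆_k)) =
      (-1) ^ n * ∑ k ∈ range (n + 1),
        x / a * (k.centralBinom / ⦅1 + a⦆_(2 * k)) * (⦅a + x⦆_k * ⦅a - x⦆_k) := by
  have hn : a - x = -n := by rw [hx]; ring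
  have hd : 1 + a - (a + x) = 1 - x := by ring
  have hx₁ : 1 + a + n = 1 + x := by rw [hx]; ring
  have ha₁ : ⦅1 + a⦆_(2 * n) ≠ 0 := add_comm a 1 ▸ right_ne_zero_of_mul
    (ascPochhammer_eval_succ_left a (2 * n) ▸ ha)
  have prefactor := ascPochhammer_one_add_div hx
    (ascPochhammer_eval_ne_zero_of_le ha (by omega : n + 1 ≤ 2 * n + 1))
  have hxn : ⦅1 - x⦆_n ≠ 0 := right_ne_zero_of_mul
    (hx ▸ ascPochhammer_eval_reflect a n ▸ ascPochhammer_eval_ne_zero_of_le ha (by omega))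
  have identity := sum_wellPoised_eq (d := a + x) ha₁ (hd ▸ hxn)
  rw [hd, hx₁, ← hn, prefactor, mul_assoc, mul_sum] at identity
  convert identity using 3
  · ring
  · ring
  · ring

theorem poch_cast (a : ℚ) (k : ℕ) :
    ((poch a k : ℚ) : K) = ⦅(a : K)⦆_k := by
  simp [poch, ascPochhammer_eval_eq_prod_range]

theorem neg_one_div_four_add_natCast {p : ℕ}
    (hp : p % 4 = 3) : (-1 / 4 : K) + ((p + 1) / 4 : ℕ) = p / 4 := by
  rw [Nat.cast_div (by omega) (by norm_num)]
  push_cast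
  ring

end Field

section Ultrametric

theorem norm_mul_le_of_norm_le_one {R : Type*} [SeminormedRing R] {x y : R} {ε : ℝ}
    (hx : ‖x‖ ≤ 1) (hy : ‖y‖ ≤ ε) : ‖x * y‖ ≤ ε :=
  (norm_mul_le x y).trans ((mul_le_of_le_one_left (norm_nonneg y) hx).trans hy)

theorem norm_sub_le_of_norm_le {E : Type*} [SeminormedAddCommGroup E] [IsUltrametricDist E]
    {x y : E} {ε : ℝ} (hx : ‖x‖ ≤ ε) (hy : ‖y‖ ≤ ε) : ‖x - y‖ ≤ ε := by
  rw [sub_eq_add_neg]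
  exact (IsUltrametricDist.norm_add_le_max x (-y)).trans (max_le hx (norm_neg y ▸ hy))

theorem norm_eq_of_norm_sub_lt {E : Type*} [SeminormedAddCommGroup E] [IsUltrametricDist E]
    {x y : E} (h : ‖x - y‖ < ‖y‖) : ‖x‖ = ‖y‖ := by
  rw [← norm_neg y]
  apply IsUltrametricDist.norm_eq_of_add_norm_lt_max
  rw [← sub_eq_add_neg, norm_neg]
  exact lt_max_of_lt_right h

variable {K : Type*} [NormedField K] [IsUltrametricDist K]

theorem norm_div_sub_div_le {x x' y y' : K} {ε : ℝ} (hx : ‖x - x'‖ ≤ ε) (hy : ‖y - y'‖ ≤ ε)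
    (hε : ε < 1) (hx' : ‖x'‖ ≤ 1) (hy' : ‖y'‖ = 1) : ‖x / y - x' / y'‖ ≤ ε := by
  have hy₁ : ‖y‖ = 1 := hy' ▸ norm_eq_of_norm_sub_lt (hy' ▸ hy.trans_lt hε)
  have hy₀ : y ≠ 0 := norm_ne_zero_iff.1 (hy₁ ▸ one_ne_zero)
  have hy₀' : y' ≠ 0 := norm_ne_zero_iff.1 (hy' ▸ one_ne_zero)
  have split : x / y - x' / y' = ((x - x') * y' - x' * (y - y')) / (y * y') := by
    field_simp
    ring
  rw [split, norm_div, norm_mul y, hy₁, hy', mul_one, div_one]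
  apply norm_sub_le_of_norm_le
  · rwa [norm_mul, hy', mul_one]
  · exact norm_mul_le_of_norm_le_one hx' hy

theorem norm_natCast_eq_one_of_dvd {d m : ℕ} (hm : ‖(m : K)‖ = 1) (hd : d ∣ m) :
    ‖(d : K)‖ = 1 := by
  obtain ⟨e, rfl⟩ := hd
  rw [Nat.cast_mul, norm_mul] at hm
  exact le_antisymm (IsUltrametricDist.norm_natCast_le_one K d)
    (hm ▸ mul_le_of_le_one_right (norm_nonneg _) (IsUltrametricDist.norm_natCast_le_one K e))

theorem norm_add_natCast_le_one {a : K} (ha : ‖a‖ ≤ 1) (n : ℕ) : ‖a + n‖ ≤ 1 :=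
  (IsUltrametricDist.norm_add_le_max a n).trans
    (max_le ha (IsUltrametricDist.norm_natCast_le_one K n))

theorem norm_ascPochhammer_le_one {a : K} (ha : ‖a‖ ≤ 1) (k : ℕ) : ‖⦅a⦆_k‖ ≤ 1 := by
  rw [ascPochhammer_eval_eq_prod_range, norm_prod]
  exact prod_le_one (fun _ _ ↦ norm_nonneg _) fun j _ ↦ norm_add_natCast_le_one ha j

theorem norm_ascPochhammer_add_mul_sub_sq_le {a x : K} (ha : ‖a‖ ≤ 1) (hx : ‖x‖ ≤ 1) (k : ℕ) :
    ‖⦅a + x⦆_k * ⦅a - x⦆_k - ⦅a⦆_k ^ 2‖ ≤ ‖x‖ ^ 2 := by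
  induction k with
  | zero => simp
  | succ k ih =>
    have hadd : ‖⦅a + x⦆_k‖ ≤ 1 := norm_ascPochhammer_le_one
      ((IsUltrametricDist.norm_add_le_max a x).trans (max_le ha hx)) k
    have hsub : ‖⦅a - x⦆_k‖ ≤ 1 := norm_ascPochhammer_le_one (norm_sub_le_of_norm_le ha hx) k
    have step : ⦅a + x⦆_(k + 1) * ⦅a - x⦆_(k + 1) - ⦅a⦆_(k + 1) ^ 2 =
        (a + k) ^ 2 * (⦅a + x⦆_k * ⦅a - x⦆_k - ⦅a⦆_k ^ 2) - ⦅a + x⦆_k * ⦅a - x⦆_k * x ^ 2 := by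
      simp only [ascPochhammer_succ_eval]
      ring
    rw [step]
    apply norm_sub_le_of_norm_le
    · refine norm_mul_le_of_norm_le_one ?_ ih
      rw [norm_pow]
      exact pow_le_one₀ (norm_nonneg _) (norm_add_natCast_le_one ha k)
    · exact norm_mul_le_of_norm_le_one (norm_mul_le_of_norm_le_one hadd hsub) (norm_pow x 2).le

theorem norm_ascPochhammer_div_sub_div_le {a x : K} {k : ℕ} (ha : ‖a‖ ≤ 1) (hx : ‖x‖ < 1)
    (hk : ‖(k.factorial : K)‖ = 1) :
    ‖⦅a + x⦆_k * ⦅a - x⦆_k / (⦅1 + x⦆_k * ⦅1 - x⦆_k) - ⦅a⦆_k ^ 2 / k.factorial ^ 2‖ ≤ ‖x‖ ^ 2 := by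
  apply norm_div_sub_div_le
  · exact norm_ascPochhammer_add_mul_sub_sq_le ha hx.le k
  · simpa [ascPochhammer_eval_one] using
      norm_ascPochhammer_add_mul_sub_sq_le (a := (1 : K)) norm_one.le hx.le k
  · exact pow_lt_one₀ (norm_nonneg _) hx two_ne_zero
  · rw [norm_pow]
    exact pow_le_one₀ (norm_nonneg _) (norm_ascPochhammer_le_one ha k)
  · rw [norm_pow, hk, one_pow]

theorem norm_sum_wellPoised_sub_sum_cube_le {a x : K} {n : ℕ} (ha : ‖a‖ ≤ 1) (hx : ‖x‖ < 1)
    (hn : ‖(n.factorial : K)‖ = 1) :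
    ‖∑ k ∈ range (n + 1), (-1) ^ k * ⦅a⦆_k * (⦅a + x⦆_k * ⦅a - x⦆_k) /
          (k.factorial * (⦅1 + x⦆_k * ⦅1 - x⦆_k)) -
        ∑ k ∈ range (n + 1), (-1) ^ k * ⦅a⦆_k ^ 3 / k.factorial ^ 3‖ ≤ ‖x‖ ^ 2 := by
  rw [← sum_sub_distrib]
  refine IsUltrametricDist.norm_sum_le_of_forall_le_of_nonneg (by positivity) fun k hk ↦ ?_
  have hkn : ‖(k.factorial : K)‖ = 1 :=
    norm_natCast_eq_one_of_dvd hn (Nat.factorial_dvd_factorial (mem_range_succ_iff.1 hk))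
  have factor : (-1) ^ k * ⦅a⦆_k * (⦅a + x⦆_k * ⦅a - x⦆_k) /
        (k.factorial * (⦅1 + x⦆_k * ⦅1 - x⦆_k)) - (-1) ^ k * ⦅a⦆_k ^ 3 / k.factorial ^ 3 =
      (-1) ^ k * ⦅a⦆_k / k.factorial * (⦅a + x⦆_k * ⦅a - x⦆_k / (⦅1 + x⦆_k * ⦅1 - x⦆_k) -
        ⦅a⦆_k ^ 2 / k.factorial ^ 2) := by
    rw [mul_sub, div_mul_div_comm, div_mul_div_comm]
    ring
  have coeff : ‖(-1) ^ k * ⦅a⦆_k / k.factorial‖ ≤ 1 := by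
    simpa [hkn] using norm_ascPochhammer_le_one ha k
  rw [factor]
  exact norm_mul_le_of_norm_le_one coeff (norm_ascPochhammer_div_sub_div_le ha hx hkn)

theorem norm_add_natCast_eq_one {a : K} {j n : ℕ} (hn : ‖(n.factorial : K)‖ = 1)
    (ha : ‖a + n‖ < 1) (hj : j ≤ 2 * n) (hjn : j ≠ n) : ‖a + j‖ = 1 := by
  have unit {d : ℕ} (hd₀ : 0 < d) (hd : d ≤ n) : ‖(d : K)‖ = 1 :=
    norm_natCast_eq_one_of_dvd hn (Nat.dvd_factorial hd₀ hd)
  have difference : ‖(j : K) - n‖ = 1 := by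
    rcases hjn.lt_or_gt with h | h
    · rw [norm_sub_rev, ← Nat.cast_sub h.le]
      exact unit (by omega) (by omega)
    · rw [← Nat.cast_sub h.le]
      exact unit (by omega) (by omega)
  rw [← difference]
  apply norm_eq_of_norm_sub_lt
  rwa [difference, show a + j - (j - n) = a + n by ring]

theorem norm_add_natCast_le_norm_ascPochhammer {a : K} {m n : ℕ} (hn : ‖(n.factorial : K)‖ = 1)
    (ha : ‖a + n‖ < 1) (hm : m ≤ 2 * n + 1) : ‖a + n‖ ≤ ‖⦅a⦆_m‖ := by
  rw [ascPochhammer_eval_eq_prod_range, norm_prod]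
  have unit : ∀ j ∈ range m, j ≠ n → ‖a + j‖ = 1 := fun j hj ↦
    norm_add_natCast_eq_one hn ha (by have := mem_range.1 hj; omega)
  by_cases hmn : n ∈ range m
  · exact (prod_eq_single_of_mem n hmn unit).ge
  · rw [prod_eq_one fun j hj ↦ unit j hj (ne_of_mem_of_not_mem hj hmn)]
    exact ha.le

theorem norm_centralBinom_div_ascPochhammer_le_one {a x : K} {k n : ℕ} (hx : x = a + n)
    (hn : ‖(n.factorial : K)‖ = 1) (hx₁ : ‖x‖ < 1) (hk : k ≤ n) :
    ‖x / a * (k.centralBinom / ⦅1 + a⦆_(2 * k))‖ ≤ 1 := by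
  rw [div_mul_div_comm, add_comm 1 a, ← ascPochhammer_eval_succ_left, norm_div, norm_mul]
  refine div_le_one_of_le₀ ?_ (norm_nonneg _)
  subst hx
  exact (mul_le_of_le_one_right (norm_nonneg _) (IsUltrametricDist.norm_natCast_le_one K _)).trans
    (norm_add_natCast_le_norm_ascPochhammer hn hx₁ (by omega))

theorem norm_sum_centralBinom_sub_le {a x : K} {n : ℕ} (hx : x = a + n) (ha : ‖a‖ ≤ 1)
    (hn : ‖(n.factorial : K)‖ = 1) (hx₁ : ‖x‖ < 1) :
    ‖∑ k ∈ range (n + 1), x / a * (k.centralBinom / ⦅1 + a⦆_(2 * k)) * (⦅a + x⦆_k * ⦅a - x⦆_k) -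
        ∑ k ∈ range (n + 1), x / a * (k.centralBinom / ⦅1 + a⦆_(2 * k)) * ⦅a⦆_k ^ 2‖ ≤
      ‖x‖ ^ 2 := by
  rw [← sum_sub_distrib]
  refine IsUltrametricDist.norm_sum_le_of_forall_le_of_nonneg (by positivity) fun k hk ↦ ?_
  rw [← mul_sub]
  exact norm_mul_le_of_norm_le_one
    (norm_centralBinom_div_ascPochhammer_le_one hx hn hx₁ (mem_range_succ_iff.1 hk))
    (norm_ascPochhammer_add_mul_sub_sq_le ha hx₁.le k)

theorem norm_natCast_div_four {p : ℕ} [Fact p.Prime] (hp : Odd p) :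
    ‖(p / 4 : ℚ_[p])‖ = (p : ℝ)⁻¹ := by
  have unit : ‖((4 : ℕ) : ℚ_[p])‖ = 1 :=
    Padic.norm_natCast_eq_one_iff.2 ((Nat.coprime_two_right.2 hp).pow_right 2)
  rw [norm_div, Padic.norm_p, ← Nat.cast_ofNat, unit, div_one]

theorem stmt13_general [CharZero K] {a : K} {n : ℕ} (hn : ‖(n.factorial : K)‖ = 1)
    (ha : ‖a + n‖ < 1) (ha₀ : a + n ≠ 0) :
    ‖∑ k ∈ range (n + 1), (-1) ^ k * ⦅a⦆_k ^ 3 / k.factorial ^ 3 -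
        (-1) ^ n * ((a + n) / a) * ∑ k ∈ range (n + 1), ⦅a⦆_k ^ 2 * ⦅(1 / 2 : K)⦆_k /
          (k.factorial * ⦅(1 + a) / 2⦆_k * ⦅1 + a / 2⦆_k)‖ ≤ ‖a + n‖ ^ 2 := by
  obtain ⟨x, hx⟩ : ∃ x, x = a + n := ⟨_, rfl⟩
  rw [← hx] at ha ha₀ ⊢
  have ha₁ : ‖a‖ ≤ 1 := by
    rw [eq_sub_of_add_eq hx.symm]
    exact norm_sub_le_of_norm_le ha.le (IsUltrametricDist.norm_natCast_le_one K n)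
  have hasc : ⦅a⦆_(2 * n + 1) ≠ 0 := by
    subst hx
    exact norm_pos_iff.1 ((norm_pos_iff.2 ha₀).trans_le
      (norm_add_natCast_le_norm_ascPochhammer hn ha le_rfl))
  have left := norm_sum_wellPoised_sub_sum_cube_le ha₁ ha hn
  have right := norm_sum_centralBinom_sub_le hx ha₁ hn ha
  rw [sum_wellPoised_add_mul_sub_eq hx hasc] at left
  have central : (-1) ^ n * (x / a) * ∑ k ∈ range (n + 1), ⦅a⦆_k ^ 2 * ⦅(1 / 2 : K)⦆_k /
      (k.factorial * ⦅(1 + a) / 2⦆_k * ⦅1 + a / 2⦆_k) = (-1) ^ n * ∑ k ∈ range (n + 1),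
        x / a * (k.centralBinom / ⦅1 + a⦆_(2 * k)) * ⦅a⦆_k ^ 2 := by
    rw [mul_assoc, mul_sum]
    refine congrArg _ (sum_congr rfl fun k _ ↦ ?_)
    rw [mul_div_assoc, ← centralBinom_div_ascPochhammer]
    ring
  have combined := norm_sub_le_of_norm_le
    (norm_mul_le_of_norm_le_one (x := (-1) ^ n) (by simp) right) left
  rwa [central, ← sub_sub_sub_cancel_left, ← mul_sub]

end Ultrametric

theorem stmt13 (p : ℕ) [Fact p.Prime] (hp4 : p % 4 = 3) :
    ‖(((∑ k ∈ Finset.range ((p + 1) / 4 + 1),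
          (-1 : ℚ) ^ k * poch (-1/4) k ^ 3 / ((k.factorial : ℚ)) ^ 3) -
        (-(-1 : ℚ) ^ ((p + 1) / 4) * p *
          ∑ k ∈ Finset.range ((p + 1) / 4 + 1),
            poch (-1/4) k ^ 2 * poch (1/2) k /
              ((k.factorial : ℚ) * poch (3/8) k * poch (7/8) k)) : ℚ) : ℚ_[p])‖ ≤
      (p : ℝ) ^ (-2 : ℤ) := by
  have hp : p.Prime := Fact.out
  have factorial_unit : ‖(((p + 1) / 4).factorial : ℚ_[p])‖ = 1 :=
    Padic.norm_natCast_eq_one_iff.2 (hp.coprime_factorial_of_lt (by omega))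
  have argument := neg_one_div_four_add_natCast (K := ℚ_[p]) hp4
  have norm_argument := norm_natCast_div_four (Nat.odd_iff.2 (Nat.odd_of_mod_four_eq_three hp4))
  have bound := stmt13_general (a := (-1 / 4 : ℚ_[p])) factorial_unit
    (by simpa [argument, norm_argument] using inv_lt_one_of_one_lt₀ (mod_cast hp.one_lt))
    (by simpa [argument] using hp.ne_zero)
  rw [argument, norm_argument, show (p / 4 / (-1 / 4) : ℚ_[p]) = -p by ring,
    show ((1 + -1 / 4) / 2 : ℚ_[p]) = 3 / 8 by norm_num,
    show (1 + -1 / 4 / 2 : ℚ_[p]) = 7 / 8 by norm_num] at bound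
  simpa [poch_cast, zpow_neg] using bound
end
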